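/- Let K be an algebraically closed field, R = K[x_0,…,x_r], Z ⊂ ℙ^r a finite reduced set of points with saturated homogeneous ideal I_Z, and J ⊆ S = R/(L) the artinian reduction by a general linear form L. Assume the h-vector of Z has the form (1, h_1, …, k, k−1, 0), where the value k occurs in degree n with n ≥ k ≥ 2 and 3 ≤ h_1 ≤ r, and the h-vector is 0 in all degrees ≥ n+2. Let W be the base locus of [J]_n in ℙ^{r−1}. Then either W is empty (the linear system |[J]_n| is basepoint free), or W is a zero-dimensional scheme of degree at most k. -/

import Mathlib

open MvPolynomial

/-- The Hilbert function of `S/I` in degree `t`: the dimension over `K` of the image of the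
space of homogeneous polynomials of degree `t` in the quotient `S/I`. -/
noncomputable def hilb {K : Type*} [Field K] {σ : Type*} (I : Ideal (MvPolynomial σ K)) (t : ℕ) : ℕ :=
  Module.finrank K
    ((homogeneousSubmodule σ K t).map (Ideal.Quotient.mkₐ K I).toLinearMap)

/-- The ideal generated by the degree-`n` component of `I`, i.e. by all homogeneous elements of
`I` of degree `n`.  Its zero locus is the base locus of the linear system `[I]_n`. -/
noncomputable def compIdeal {K : Type*} [Field K] {σ : Type*} (I : Ideal (MvPolynomial σ K)) (n : ℕ) :
    Ideal (MvPolynomial σ K) :=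
  Ideal.span ((I : Set (MvPolynomial σ K)) ∩ (homogeneousSubmodule σ K n : Set (MvPolynomial σ K)))

/-- The first difference of the Hilbert function of `R/I`; for the saturated ideal of a finite
set of points this is the `h`-vector, i.e. the Hilbert function of an artinian reduction by a
general linear form. -/
noncomputable def hvec {K : Type*} [Field K] {σ : Type*} (I : Ideal (MvPolynomial σ K)) : ℕ → ℕ
  | 0 => hilb I 0
  | t + 1 => hilb I (t + 1) - hilb I t

/-- The saturated homogeneous ideal of a (finite) set of points of `ℙ^{m-1}`, the points being
given by (nonzero) representative vectors: a polynomial lies in this ideal iff it vanishes at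
every scalar multiple of every representative, i.e. iff all of its homogeneous components vanish
at the corresponding projective points. -/
noncomputable def pointsIdeal {K : Type*} [Field K] {m : ℕ} (Z : Set (Fin m → K)) :
    Ideal (MvPolynomial (Fin m) K) :=
  ⨅ v ∈ Z, ⨅ c : K, RingHom.ker (eval (c • v))

/-!
Write `J` for the ideal generated by `[I]_n` and `L`. Since `L` is regular on `R/I`, the Hilbert
function of `R/J` in degree `n` is at most `hvec I n ≤ n`. Below the diagonal Macaulay's growth
bound says that a Hilbert function can no longer increase: if `hilb J t ≤ t`, then
`hilb J (t + 1) ≤ hilb J t`. So from degree `n` on the Hilbert function of `R/J` decreases, and it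
stabilizes at a value at most `hvec I n`.

For the growth bound, the monomials standard with respect to a monomial order reduce the claim to
finite sets of monomials, where one slices along the exponent of one variable. Some slice is empty,
as there are fewer monomials than levels: the slices below the first empty one are small enough for
induction on the number of variables, and those above it are compared by dividing by the slicing
variable.
-/

/-! ### Growth of finite sets of monomials -/

theorem exists_eq_zero_of_sum_range_le {t : ℕ} {m : ℕ → ℕ}
    (hm : ∑ j ∈ Finset.range (t + 1), m j ≤ t) :
    ∃ c ≤ t, m c = 0 ∧ ∀ j < c, m j ≤ t - j := by
  have hzero : ∃ c, c ≤ t ∧ m c = 0 := by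
    by_contra! hpos
    have hcard : ∑ _j ∈ Finset.range (t + 1), 1 ≤ ∑ j ∈ Finset.range (t + 1), m j :=
      Finset.sum_le_sum fun j hj ↦
        Nat.one_le_iff_ne_zero.mpr (hpos j (Finset.mem_range_succ_iff.mp hj))
    rw [Finset.sum_const, Finset.card_range, smul_eq_mul, mul_one] at hcard
    lia
  obtain ⟨hct, hc⟩ := Nat.find_spec hzero
  refine ⟨Nat.find hzero, hct, hc, fun j hj ↦ ?_⟩
  -- The other values below the first zero are positive and use up part of the total `t`.
  have hpos : ∀ i ∈ (Finset.range (Nat.find hzero)).erase j, 1 ≤ m i := fun i hi ↦ by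
    have hic := Finset.mem_range.mp (Finset.mem_of_mem_erase hi)
    exact Nat.one_le_iff_ne_zero.mpr fun h0 ↦ Nat.find_min hzero hic ⟨by lia, h0⟩
  have hrest := Finset.card_nsmul_le_sum _ _ _ hpos
  rw [Finset.card_erase_of_mem (Finset.mem_range.mpr hj), Finset.card_range, smul_eq_mul,
    mul_one] at hrest
  have hsplit := Finset.add_sum_erase (Finset.range (Nat.find hzero)) m (Finset.mem_range.mpr hj)
  have hmono : ∑ i ∈ Finset.range (Nat.find hzero), m i ≤ ∑ i ∈ Finset.range (t + 1), m i :=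
    Finset.sum_le_sum_of_subset (Finset.range_subset_range.mpr (by lia))
  lia

theorem sum_range_le_sum_range_of_shift_le {t : ℕ} {m n : ℕ → ℕ}
    (hm : ∑ j ∈ Finset.range (t + 1), m j ≤ t) (hshift : ∀ j, n (j + 1) ≤ m j)
    (hsmall : ∀ j ≤ t, m j ≤ t - j → n j ≤ m j) :
    ∑ j ∈ Finset.range (t + 2), n j ≤ ∑ j ∈ Finset.range (t + 1), m j := by
  obtain ⟨c, hct, hc, hlow⟩ := exists_eq_zero_of_sum_range_le hm
  have hnc : n c = 0 := by
    have := hsmall c hct (by lia)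
    lia
  calc ∑ j ∈ Finset.range (t + 2), n j
      = ∑ j ∈ Finset.range (c + 1), n j + ∑ j ∈ Finset.Ico c (t + 1), n (j + 1) := by
        rw [Finset.sum_Ico_add' n, Finset.sum_range_add_sum_Ico n (by lia)]
    _ = ∑ j ∈ Finset.range c, n j + ∑ j ∈ Finset.Ico c (t + 1), n (j + 1) := by
        rw [Finset.sum_range_succ, hnc, add_zero]
    _ ≤ ∑ j ∈ Finset.range c, m j + ∑ j ∈ Finset.Ico c (t + 1), m j := by
        gcongr with j hj j
        · have hjc := Finset.mem_range.mp hj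
          exact hsmall j (by lia) (hlow j hjc)
        · exact hshift j
    _ = ∑ j ∈ Finset.range (t + 1), m j := Finset.sum_range_add_sum_Ico m (by lia)

section Slice

variable {σ : Type*} [DecidableEq σ]

/-- The slice at level `j` of a set `A` of exponent vectors along the variable `a`: the vectors of
`A` whose exponent at `a` is `j`, with that exponent reset to `0`. -/
noncomputable def slice (a : σ) (A : Finset (σ →₀ ℕ)) (j : ℕ) : Finset (σ →₀ ℕ) :=
  {u ∈ A | u a = j}.image (Finsupp.erase a)

theorem mem_slice {a : σ} {A : Finset (σ →₀ ℕ)} {j : ℕ} {v : σ →₀ ℕ} :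
    v ∈ slice a A j ↔ v a = 0 ∧ v + Finsupp.single a j ∈ A := by
  simp only [slice, Finset.mem_image, Finset.mem_filter]
  constructor
  · rintro ⟨u, ⟨hu, rfl⟩, rfl⟩
    exact ⟨Finsupp.erase_same, by rwa [Finsupp.erase_add_single]⟩
  · rintro ⟨hv, hvA⟩
    refine ⟨_, ⟨hvA, by simp [hv]⟩, ?_⟩
    rw [Finsupp.erase_add, Finsupp.erase_single, add_zero,
      Finsupp.erase_of_notMem_support (by simpa using hv)]

theorem card_slice (a : σ) (A : Finset (σ →₀ ℕ)) (j : ℕ) :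
    (slice a A j).card = {u ∈ A | u a = j}.card := by
  refine Finset.card_image_of_injOn fun u hu w hw huw ↦ ?_
  rw [← Finsupp.erase_add_single a u, ← Finsupp.erase_add_single a w, huw,
    (Finset.mem_filter.mp hu).2, (Finset.mem_filter.mp hw).2]

theorem sum_card_slice (a : σ) (A : Finset (σ →₀ ℕ)) (R : Finset ℕ) :
    ∑ j ∈ R, (slice a A j).card = {u ∈ A | u a ∈ R}.card := by
  simp_rw [card_slice]
  exact Finset.sum_card_fiberwise_eq_card_filter A R fun u ↦ u a

end Slice

theorem card_le_card_of_forall_add_single_mem {σ : Type*} (s : Finset σ) {t : ℕ}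
    {M N : Finset (σ →₀ ℕ)} (hM : M.card ≤ t) (hsupp : ∀ u ∈ N, u.support ⊆ s)
    (hdeg : ∀ u ∈ N, u.degree = t + 1) (hdvd : ∀ w i, w + Finsupp.single i 1 ∈ N → w ∈ M) :
    N.card ≤ M.card := by
  classical
  induction s using Finset.induction_on generalizing t M N with
  | empty =>
    have hN : N = ∅ := Finset.eq_empty_of_forall_notMem fun u hu ↦ by
      have h0 : u = 0 := by simpa using hsupp u hu
      simpa [h0] using hdeg u hu
    simp [hN]
  | insert a s _ ih =>
    have hsum_M : ∑ j ∈ Finset.range (t + 1), (slice a M j).card ≤ M.card := by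
      rw [sum_card_slice]
      exact Finset.card_filter_le _ _
    have hsum_N : ∑ j ∈ Finset.range (t + 2), (slice a N j).card = N.card := by
      rw [sum_card_slice, Finset.filter_true_of_mem]
      intro u hu
      have hua := Finsupp.le_degree a u
      rw [hdeg u hu] at hua
      exact Finset.mem_range_succ_iff.mpr hua
    have hshift (j : ℕ) : slice a N (j + 1) ⊆ slice a M j := fun v hv ↦ by
      rw [mem_slice, Finsupp.single_add, ← add_assoc] at hv
      exact mem_slice.mpr ⟨hv.1, hdvd _ a hv.2⟩
    have hsmall (j : ℕ) (hj : j ≤ t) (hMj : (slice a M j).card ≤ t - j) :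
        (slice a N j).card ≤ (slice a M j).card := by
      refine ih hMj (fun v hv i hi ↦ ?_) (fun v hv ↦ ?_) fun w i hw ↦ ?_
      · obtain ⟨hva, hvN⟩ := mem_slice.mp hv
        have hia : i ≠ a := fun h ↦ Finsupp.mem_support_iff.mp hi (h ▸ hva)
        have his := hsupp _ hvN (Finsupp.support_mono le_self_add hi)
        exact Finset.mem_of_mem_insert_of_ne his hia
      · have hdeg_v := hdeg _ (mem_slice.mp hv).2
        rw [map_add, Finsupp.degree_single] at hdeg_v
        lia
      · obtain ⟨hwa, hwN⟩ := mem_slice.mp hw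
        rw [add_right_comm] at hwN
        exact mem_slice.mpr ⟨(Nat.add_eq_zero_iff.mp hwa).1, hdvd _ i hwN⟩
    rw [← hsum_N]
    exact (sum_range_le_sum_range_of_shift_le (hsum_M.trans hM)
      (fun j ↦ Finset.card_le_card (hshift j)) hsmall).trans hsum_M

/-! ### Pivots and standard monomials -/

section Pivots

variable {K V ι α : Type*} [Field K] [AddCommGroup V] [Module K V] [LinearOrder α]
  (e : ι → α) (f : ι → V) (D : Set ι)

variable (K) in
/-- The pivots of the family `f` on `D`, in the sense of Gaussian elimination: the indices whose
vector is not in the span of the earlier ones, where the order on indices is pulled back along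
`e`. -/
def pivots : Set ι :=
  {u ∈ D | f u ∉ Submodule.span K (f '' {v ∈ D | e v < e u})}

theorem span_image_pivots [WellFoundedLT α] :
    Submodule.span K (f '' pivots K e f D) = Submodule.span K (f '' D) := by
  refine le_antisymm (Submodule.span_mono (Set.image_mono fun u hu ↦ hu.1))
    (Submodule.span_le.mpr ?_)
  rintro _ ⟨u, hu, rfl⟩
  induction u using (InvImage.wf e (wellFounded_lt (α := α))).induction with
  | _ u ih =>
    by_cases hpiv : u ∈ pivots K e f D
    · exact Submodule.subset_span ⟨u, hpiv, rfl⟩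
    · have hspan : f u ∈ Submodule.span K (f '' {v ∈ D | e v < e u}) := by
        by_contra h
        exact hpiv ⟨hu, h⟩
      refine Submodule.span_le.mpr ?_ hspan
      rintro _ ⟨v, ⟨hvD, hvu⟩, rfl⟩
      exact ih v hvu hvD

variable {e} in
theorem linearIndepOn_pivots (he : Function.Injective e) :
    LinearIndepOn K f (pivots K e f D) := by
  classical
  refine linearIndepOn_of_finite _ fun T hT hfin ↦ ?_
  lift T to Finset ι using hfin
  induction T using Finset.induction_on_max_value e with
  | empty => simp
  | insert a T haT hmax ih =>
    rw [Finset.coe_insert, Set.insert_subset_iff] at hT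
    have hearlier : ↑T ⊆ {v ∈ D | e v < e a} := fun v hv ↦
      ⟨(hT.2 hv).1, (hmax v hv).lt_of_ne fun h ↦ haT (he h ▸ hv)⟩
    rw [Finset.coe_insert]
    exact (ih hT.2).insert fun hspan ↦
      hT.1.2 (Submodule.span_mono (Set.image_mono hearlier) hspan)

variable {e} in
theorem finrank_span_image_eq_ncard_pivots [WellFoundedLT α] (he : Function.Injective e) :
    Module.finrank K (Submodule.span K (f '' D)) = (pivots K e f D).ncard := by
  rw [← span_image_pivots e, Set.image_eq_range,
    Module.finrank_eq_nat_card_basis (Module.Basis.span (linearIndepOn_pivots f D he)),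
    Nat.card_coe_set_eq]

end Pivots

section HilbertFunction

variable {K σ : Type*} [Field K]

theorem hilb_eq_finrank_span (I : Ideal (MvPolynomial σ K)) (t : ℕ) :
    hilb I t = Module.finrank K (Submodule.span K
      ((fun u : σ →₀ ℕ ↦ Ideal.Quotient.mkₐ K I (monomial u 1)) '' {u | u.degree = t})) := by
  have hspan : homogeneousSubmodule σ K t =
      Submodule.span K ((monomial · 1) '' {u : σ →₀ ℕ | u.degree = t}) :=
    (homogeneousSubmodule_eq_finsupp_supported σ K t).trans (restrictSupport_eq_span K _)
  rw [hilb, hspan, Submodule.map_span, Set.image_image]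
  rfl

/-- The exponents of the standard monomials of degree `t` modulo `I`, i.e. those that are not
congruent to a combination of smaller monomials of degree `t`. For homogeneous `I` these are the
monomials of degree `t` outside the initial ideal. -/
noncomputable def standardExponents (ord : MonomialOrder σ) (I : Ideal (MvPolynomial σ K))
    (t : ℕ) : Set (σ →₀ ℕ) :=
  pivots K ord.toSyn (fun u ↦ Ideal.Quotient.mkₐ K I (monomial u 1)) {u | u.degree = t}

theorem hilb_eq_ncard_standardExponents (ord : MonomialOrder σ) (I : Ideal (MvPolynomial σ K))
    (t : ℕ) : hilb I t = (standardExponents ord I t).ncard := by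
  rw [hilb_eq_finrank_span, finrank_span_image_eq_ncard_pivots _ _ ord.toSyn.injective,
    standardExponents]

theorem mem_standardExponents_of_add_single_mem {ord : MonomialOrder σ}
    {I : Ideal (MvPolynomial σ K)} {t : ℕ} {w : σ →₀ ℕ} {i : σ}
    (h : w + Finsupp.single i 1 ∈ standardExponents ord I (t + 1)) :
    w ∈ standardExponents ord I t := by
  obtain ⟨hdeg, hspan⟩ := h
  have hX (v : σ →₀ ℕ) : LinearMap.mulLeft K (Ideal.Quotient.mkₐ K I (X i))
      (Ideal.Quotient.mkₐ K I (monomial v 1)) =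
        Ideal.Quotient.mkₐ K I (monomial (v + Finsupp.single i 1) 1) := by
    rw [LinearMap.mulLeft_apply, ← map_mul, X, monomial_mul, one_mul, add_comm]
  refine ⟨by simpa using hdeg, fun hw ↦ hspan ?_⟩
  have hmul := Submodule.mem_map_of_mem
    (f := LinearMap.mulLeft K (Ideal.Quotient.mkₐ K I (X i))) hw
  rw [hX, Submodule.map_span, Set.image_image] at hmul
  refine Submodule.span_mono ?_ hmul
  rintro _ ⟨v, ⟨hv, hvw⟩, rfl⟩
  refine ⟨v + Finsupp.single i 1, ⟨by simpa using hv, ?_⟩, (hX v).symm⟩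
  simpa only [map_add, add_lt_add_iff_right] using hvw

theorem hilb_succ_le_of_hilb_le [Finite σ] {I : Ideal (MvPolynomial σ K)} {t : ℕ}
    (h : hilb I t ≤ t) : hilb I (t + 1) ≤ hilb I t := by
  have := Fintype.ofFinite σ
  let : LinearOrder σ := LinearOrder.lift' (Finite.equivFin σ) (Finite.equivFin σ).injective
  let ord : MonomialOrder σ := MonomialOrder.lex
  have hfin (d : ℕ) : (standardExponents ord I d).Finite :=
    (Finsupp.finite_of_degree_eq d).subset fun u hu ↦ hu.1
  have hcard (d : ℕ) : hilb I d = (hfin d).toFinset.card := by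
    rw [hilb_eq_ncard_standardExponents ord, Set.ncard_eq_toFinset_card _ (hfin d)]
  rw [hcard] at h
  rw [hcard, hcard]
  refine card_le_card_of_forall_add_single_mem Finset.univ h (fun u _ ↦ Finset.subset_univ _)
    (fun u hu ↦ ((hfin _).mem_toFinset.mp hu).1) fun w i hw ↦ ?_
  rw [Set.Finite.mem_toFinset] at hw ⊢
  exact mem_standardExponents_of_add_single_mem hw

theorem exists_forall_eq_of_forall_succ_le {f : ℕ → ℕ} {n : ℕ}
    (hf : ∀ t, f t ≤ t → f (t + 1) ≤ f t) (hn : f n ≤ n) :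
    ∃ d ≤ f n, ∃ N, ∀ t, N ≤ t → f t = d := by
  have hbound (j : ℕ) : f (n + j) ≤ n + j := by
    induction j with
    | zero => exact hn
    | succ j ih => exact (hf _ ih).trans (ih.trans (Nat.le_succ _))
  have hanti : Antitone fun j ↦ f (n + j) := antitone_nat_of_succ_le fun j ↦ hf _ (hbound j)
  obtain ⟨N, hN⟩ := WellFoundedLT.antitone_chain_condition hanti
  refine ⟨f (n + N), hanti (Nat.zero_le N), n + N, fun t ht ↦ ?_⟩
  obtain ⟨j, rfl⟩ := Nat.exists_eq_add_of_le ht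
  rw [hN (N + j) (Nat.le_add_right N j), add_assoc]

theorem exists_forall_hilb_eq_of_hilb_le [Finite σ] {I : Ideal (MvPolynomial σ K)} {n : ℕ}
    (h : hilb I n ≤ n) : ∃ d ≤ hilb I n, ∃ N, ∀ t, N ≤ t → hilb I t = d :=
  exists_forall_eq_of_forall_succ_le (fun _ ↦ hilb_succ_le_of_hilb_le) h

end HilbertFunction

/-! ### Hyperplane sections -/

section RankNullity

variable {K V W W' : Type*} [Field K] [AddCommGroup V] [Module K V] [AddCommGroup W] [Module K W]
  [AddCommGroup W'] [Module K W']

theorem finrank_map_add_finrank_inf_ker (f : V →ₗ[K] W) (H : Submodule K V)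
    [FiniteDimensional K H] :
    Module.finrank K (H.map f) + Module.finrank K ↥(H ⊓ LinearMap.ker f) =
      Module.finrank K H := by
  rw [← LinearMap.finrank_range_add_finrank_ker (f.domRestrict H), LinearMap.range_domRestrict,
    LinearMap.ker_domRestrict, ← Submodule.map_comap_subtype,
    Submodule.finrank_map_subtype_eq]

theorem finrank_map_add_finrank_map_le {f : V →ₗ[K] W} {g : V →ₗ[K] W'} {H U : Submodule K V}
    [FiniteDimensional K H] (hker : H ⊓ LinearMap.ker f ≤ LinearMap.ker g) (hUH : U ≤ H)
    (hUg : U ≤ LinearMap.ker g) :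
    Module.finrank K (H.map g) + Module.finrank K (U.map f) ≤ Module.finrank K (H.map f) := by
  obtain ⟨G, hG⟩ : ∃ G, G = H ⊓ LinearMap.ker g := ⟨_, rfl⟩
  have hGH : G ≤ H := hG.trans_le inf_le_left
  have : FiniteDimensional K G := Submodule.finiteDimensional_of_le hGH
  have hGf : G ⊓ LinearMap.ker f = H ⊓ LinearMap.ker f :=
    le_antisymm (inf_le_inf_right _ hGH) (le_inf (hG ▸ le_inf inf_le_left hker) inf_le_right)
  have hrank_f := finrank_map_add_finrank_inf_ker f H
  have hrank_g := finrank_map_add_finrank_inf_ker g H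
  have hrank_G := finrank_map_add_finrank_inf_ker f G
  have hU : Module.finrank K (U.map f) ≤ Module.finrank K (G.map f) :=
    Submodule.finrank_mono (Submodule.map_mono (hG ▸ le_inf hUH hUg))
  rw [hGf] at hrank_G
  rw [← hG] at hrank_g
  lia

theorem finrank_map_le_of_inf_ker_le {f : V →ₗ[K] W} {g : V →ₗ[K] W'} {H : Submodule K V}
    [FiniteDimensional K H] (hker : H ⊓ LinearMap.ker f ≤ LinearMap.ker g) :
    Module.finrank K (H.map g) ≤ Module.finrank K (H.map f) :=
  (Nat.le_add_right _ _).trans (finrank_map_add_finrank_map_le hker bot_le bot_le)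

end RankNullity

section HyperplaneSection

variable {K σ : Type*} [Field K]

theorem mem_ker_mkₐ {I : Ideal (MvPolynomial σ K)} {p : MvPolynomial σ K} :
    p ∈ LinearMap.ker (Ideal.Quotient.mkₐ K I).toLinearMap ↔ p ∈ I :=
  Ideal.Quotient.eq_zero_iff_mem

theorem mem_compIdeal {I : Ideal (MvPolynomial σ K)} {n : ℕ} {p : MvPolynomial σ K}
    (hp : p ∈ I) (hpn : p.IsHomogeneous n) : p ∈ compIdeal I n :=
  Ideal.subset_span ⟨hp, hpn⟩

variable [Finite σ] {I : Ideal (MvPolynomial σ K)} {L : MvPolynomial σ K}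

theorem hilb_compIdeal_sup_span_le_hvec (hL : L.IsHomogeneous 1)
    (hreg : ∀ s p, p.IsHomogeneous s → L * p ∈ I → p ∈ I) (n : ℕ) :
    hilb (compIdeal I n ⊔ Ideal.span {L}) n ≤ hvec I n := by
  have hfin (d : ℕ) : FiniteDimensional K (homogeneousSubmodule σ K d) :=
    Module.Finite.iff_fg.mpr (homogeneousSubmodule_fg σ K d)
  set J := compIdeal I n ⊔ Ideal.span {L} with hJ
  let mkI := (Ideal.Quotient.mkₐ K I).toLinearMap
  let mkJ := (Ideal.Quotient.mkₐ K J).toLinearMap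
  have hker : homogeneousSubmodule σ K n ⊓ LinearMap.ker mkI ≤ LinearMap.ker mkJ :=
    fun p ⟨hpn, hpI⟩ ↦
      mem_ker_mkₐ.mpr (Ideal.mem_sup_left (mem_compIdeal (mem_ker_mkₐ.mp hpI) hpn))
  cases n with
  | zero => exact finrank_map_le_of_inf_ker_le hker
  | succ s =>
    let U := (homogeneousSubmodule σ K s).map (LinearMap.mulLeft K L)
    have hU : U ≤ homogeneousSubmodule σ K (s + 1) := by
      rintro _ ⟨p, hp, rfl⟩
      exact add_comm s 1 ▸ hL.mul hp
    have hUJ : U ≤ LinearMap.ker mkJ := by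
      rintro _ ⟨p, -, rfl⟩
      exact mem_ker_mkₐ.mpr
        (J.mul_mem_right p (Ideal.mem_sup_right (Ideal.mem_span_singleton_self L)))
    have hUI : hilb I s ≤ Module.finrank K (U.map mkI) := by
      rw [← Submodule.map_comp]
      exact finrank_map_le_of_inf_ker_le fun p ⟨hp, hLp⟩ ↦
        mem_ker_mkₐ.mpr (hreg s p hp (mem_ker_mkₐ.mp hLp))
    have hsection : hilb J (s + 1) + Module.finrank K (U.map mkI) ≤ hilb I (s + 1) :=
      finrank_map_add_finrank_map_le hker hU hUJ
    exact Nat.le_sub_of_add_le (by lia)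

theorem points_type_k_kminus1_baseLocus_empty_or_finite_general {n : ℕ} (hn : hvec I n ≤ n)
    (hL : L.IsHomogeneous 1) (hreg : ∀ s p, p.IsHomogeneous s → L * p ∈ I → p ∈ I) :
    ∃ d ≤ hvec I n, ∃ N, ∀ t, N ≤ t → hilb (compIdeal I n ⊔ Ideal.span {L}) t = d := by
  have hle := hilb_compIdeal_sup_span_le_hvec hL hreg n
  obtain ⟨d, hd, hN⟩ := exists_forall_hilb_eq_of_hilb_le (hle.trans hn)
  exact ⟨d, hd.trans hle, hN⟩

end HyperplaneSection

section Points

theorem eval_smul_of_isHomogeneous {R σ : Type*} [CommSemiring R] {p : MvPolynomial σ R} {s : ℕ}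
    (hp : p.IsHomogeneous s) (c : R) (v : σ → R) : eval (c • v) p = c ^ s * eval v p := by
  rw [eval_eq, eval_eq, Finset.mul_sum]
  refine Finset.sum_congr rfl fun d hd ↦ ?_
  have hdeg : ∑ i ∈ d.support, d i = s := by
    by_contra h
    exact mem_support_iff.mp hd (hp.coeff_eq_zero h)
  simp only [Pi.smul_apply, smul_eq_mul, mul_pow, Finset.prod_mul_distrib,
    Finset.prod_pow_eq_pow_sum, hdeg]
  ring

variable {K : Type*} [Field K] {m : ℕ} {Z : Set (Fin m → K)} {p : MvPolynomial (Fin m) K}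

theorem mem_pointsIdeal : p ∈ pointsIdeal Z ↔ ∀ v ∈ Z, ∀ c : K, eval (c • v) p = 0 := by
  simp only [pointsIdeal, Submodule.mem_iInf, RingHom.mem_ker]

theorem mem_pointsIdeal_of_isHomogeneous {s : ℕ} (hp : p.IsHomogeneous s) :
    p ∈ pointsIdeal Z ↔ ∀ v ∈ Z, eval v p = 0 := by
  refine mem_pointsIdeal.trans (forall₂_congr fun v _ ↦ ⟨fun h ↦ ?_, fun h c ↦ ?_⟩)
  · simpa only [one_smul] using h 1
  · rw [eval_smul_of_isHomogeneous hp, h, mul_zero]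

theorem mem_pointsIdeal_of_mul_mem {L : MvPolynomial (Fin m) K} {d s : ℕ}
    (hL : L.IsHomogeneous d) (hLZ : ∀ v ∈ Z, eval v L ≠ 0) (hp : p.IsHomogeneous s)
    (hLp : L * p ∈ pointsIdeal Z) : p ∈ pointsIdeal Z := by
  rw [mem_pointsIdeal_of_isHomogeneous (hL.mul hp)] at hLp
  refine (mem_pointsIdeal_of_isHomogeneous hp).mpr fun v hv ↦ ?_
  have hprod := hLp v hv
  rw [map_mul] at hprod
  exact (mul_eq_zero.mp hprod).resolve_left (hLZ v hv)

end Points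

/-- **Lemma.**  Let `Z ⊂ ℙ^r` be a finite reduced set of points whose `h`-vector has the form
`(1, h_1, …, k, k-1, 0)`, with the `k` in degree `n`, `n ≥ k ≥ 2`, `3 ≤ h_1 ≤ r`, and `0` in all
degrees `≥ n+2`.  Let `J` be the artinian reduction of `I_Z` by a general linear form `L`
(here: any linear form not vanishing at any point of `Z`), and let `W` be the base locus of
`[J]_n` in `ℙ^{r-1}`, i.e. the subscheme of the hyperplane `L = 0` cut out by `⟨[I_Z]_n⟩ + (L)`.
Then either `W` is empty (the linear system `|[J]_n|` is basepoint free), or `W` is a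
zero-dimensional scheme of degree at most `k`  (expressed via the eventual value `d` of the
Hilbert function of `R/(⟨[I_Z]_n⟩ + (L))`, which is `0` iff `W = ∅`, and otherwise is the degree
of the zero-dimensional scheme `W`). -/
theorem points_type_k_kminus1_baseLocus_empty_or_finite
    {K : Type*} [Field K] [IsAlgClosed K] {r n k : ℕ}
    (Z : Finset (Fin (r + 1) → K))
    (hZ0 : ∀ v ∈ Z, v ≠ (0 : Fin (r + 1) → K))
    (hZdist : ∀ v ∈ Z, ∀ w ∈ Z, v ≠ w → ∀ c : K, w ≠ c • v)
    (hk : 2 ≤ k) (hkn : k ≤ n)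
    (hh1lo : 3 ≤ hvec (pointsIdeal (↑Z : Set (Fin (r + 1) → K))) 1)
    (hh1hi : hvec (pointsIdeal (↑Z : Set (Fin (r + 1) → K))) 1 ≤ r)
    (hhn : hvec (pointsIdeal (↑Z : Set (Fin (r + 1) → K))) n = k)
    (hhn1 : hvec (pointsIdeal (↑Z : Set (Fin (r + 1) → K))) (n + 1) + 1 = k)
    (hhtail : ∀ t, n + 2 ≤ t → hvec (pointsIdeal (↑Z : Set (Fin (r + 1) → K))) t = 0)
    (L : MvPolynomial (Fin (r + 1)) K) (hL : L.IsHomogeneous 1) (hL0 : L ≠ 0)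
    (hLZ : ∀ v ∈ Z, eval v L ≠ 0) :
    (∃ N : ℕ, ∀ t, N ≤ t →
      hilb (compIdeal (pointsIdeal (↑Z : Set (Fin (r + 1) → K))) n ⊔ Ideal.span {L}) t = 0) ∨
    (∃ d : ℕ, 0 < d ∧ d ≤ k ∧ ∃ N : ℕ, ∀ t, N ≤ t →
      hilb (compIdeal (pointsIdeal (↑Z : Set (Fin (r + 1) → K))) n ⊔ Ideal.span {L}) t = d) := by
  obtain ⟨d, hd, N, hN⟩ := points_type_k_kminus1_baseLocus_empty_or_finite_general
    (hhn.trans_le hkn) hL fun _ _ ↦ mem_pointsIdeal_of_mul_mem hL hLZ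
  exact d.eq_zero_or_pos.imp (fun h : d = 0 ↦ ⟨N, h ▸ hN⟩) fun h ↦ ⟨d, h, hd.trans_eq hhn, N, hN⟩
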